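/- Let G be a graph on 2r vertices admitting a perfect matching M consisting of right edges. Then every basic 1-cover α of G satisfies Σ_{v∈V} α(v) = r; in particular G is unmixed, i.e. all minimal vertex covers of G have the same cardinality r. -/

import Mathlib

/-- A `k`-cover of a graph `G`. -/
def IsCover {n : ℕ} (G : SimpleGraph (Fin n)) (k : ℕ) (α : Fin n → ℕ) : Prop :=
  ∀ ⦃i j : Fin n⦄, G.Adj i j → k ≤ α i + α j

/-- A basic `k`-cover; basic 1-covers correspond to minimal vertex covers. -/
def IsBasicCover {n : ℕ} (G : SimpleGraph (Fin n)) (k : ℕ) (α : Fin n → ℕ) : Prop :=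
  IsCover G k α ∧ ∀ β : Fin n → ℕ, β ≤ α → IsCover G k β → β = α

/-- `{i,j}` is a right edge of `G`. -/
def IsRightEdge {n : ℕ} (G : SimpleGraph (Fin n)) (i j : Fin n) : Prop :=
  G.Adj i j ∧ ∀ i' j' : Fin n, G.Adj i i' → G.Adj j j' → G.Adj i' j'

/-!
A basic cover cannot be lowered at a vertex `v` of its support, so `v` has a neighbour `v'` with
`α v + α v' = k`. If `{i, j}` is a right edge, adding the tight edges `{i, i'}` and `{j, j'}` gives
`α i + α j + α i' + α j' = 2 * k`, while `{i', j'}` is again an edge, so that `k ≤ α i' + α j'`.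
Hence `{i, j}` is itself tight, and the sum of `α` can be computed along the matching.
-/

open Function Finset

section Cover

variable {n k : ℕ} {G : SimpleGraph (Fin n)} {α : Fin n → ℕ}

theorem IsCover.update (hα : IsCover G k α) {v : Fin n} {a : ℕ}
    (ha : ∀ w, G.Adj v w → k ≤ a + α w) : IsCover G k (update α v a) := by
  intro i j hij
  rcases eq_or_ne i v with rfl | hi
  · rw [update_self, update_of_ne hij.ne']
    exact ha j hij
  rcases eq_or_ne j v with rfl | hj
  · rw [update_self, update_of_ne hij.ne, add_comm]
    exact ha i hij.symm
  · rw [update_of_ne hi, update_of_ne hj]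
    exact hα hij

theorem IsBasicCover.exists_adj_add_eq (hα : IsBasicCover G k α) {v : Fin n} (hv : α v ≠ 0) :
    ∃ w, G.Adj v w ∧ α v + α w = k := by
  by_contra! hloose
  have hlower : IsCover G k (update α v (α v - 1)) := hα.1.update fun w hvw => by
    have := hα.1 hvw
    have := hloose w hvw
    omega
  have hfix : update α v (α v - 1) = α :=
    hα.2 _ (update_le_self_iff.2 (Nat.sub_le _ _)) hlower
  have hval : α v - 1 = α v := update_eq_self_iff.1 hfix
  omega

theorem IsBasicCover.apply_le (hα : IsBasicCover G k α) (v : Fin n) : α v ≤ k := by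
  rcases eq_or_ne (α v) 0 with hv | hv
  · exact hv ▸ k.zero_le
  · obtain ⟨w, -, hw⟩ := hα.exists_adj_add_eq hv
    exact hw ▸ Nat.le_add_right _ _

theorem IsBasicCover.add_eq_of_isRightEdge (hα : IsBasicCover G k α) {i j : Fin n}
    (hij : IsRightEdge G i j) : α i + α j = k := by
  refine le_antisymm ?_ (hα.1 hij.1)
  rcases eq_or_ne (α i) 0 with hi | hi
  · simpa only [hi, zero_add] using hα.apply_le j
  rcases eq_or_ne (α j) 0 with hj | hj
  · simpa only [hj, add_zero] using hα.apply_le i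
  obtain ⟨i', hii', hi'⟩ := hα.exists_adj_add_eq hi
  obtain ⟨j', hjj', hj'⟩ := hα.exists_adj_add_eq hj
  have hcover : k ≤ α i' + α j' := hα.1 (hij.2 i' j' hii' hjj')
  omega

end Cover

section PerfectMatching

variable {V : Type*} {G : SimpleGraph V} {M : G.Subgraph}

theorem exists_involutive_adj_of_isPerfectMatching (hM : M.IsPerfectMatching) :
    ∃ f : V → V, Involutive f ∧ ∀ v, M.Adj v (f v) := by
  choose f hf hf_unique using SimpleGraph.Subgraph.isPerfectMatching_iff.1 hM
  exact ⟨f, fun v => (hf_unique (f v) v (hf v).symm).symm, hf⟩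

theorem two_nsmul_sum_eq_of_isPerfectMatching {A : Type*} [AddCommMonoid A] [Fintype V]
    (hM : M.IsPerfectMatching) {α : V → A} {c : A} (hα : ∀ v w, M.Adj v w → α v + α w = c) :
    2 • ∑ v, α v = Fintype.card V • c := by
  obtain ⟨f, hf, hadj⟩ := exists_involutive_adj_of_isPerfectMatching hM
  calc
    2 • ∑ v, α v = ∑ v, α v + ∑ v, α (f v) := by
      rw [two_nsmul, hf.bijective.sum_comp α]
    _ = ∑ v, (α v + α (f v)) := sum_add_distrib.symm
    _ = ∑ _v : V, c := sum_congr rfl fun v _ => hα v (f v) (hadj v)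
    _ = Fintype.card V • c := by rw [sum_const, card_univ]

end PerfectMatching

theorem card_filter_ne_zero_eq_sum_of_le_one {ι : Type*} {s : Finset ι} {f : ι → ℕ}
    (hf : ∀ i ∈ s, f i ≤ 1) : (s.filter fun i => f i ≠ 0).card = ∑ i ∈ s, f i := by
  rw [card_filter]
  refine sum_congr rfl fun i hi => ?_
  have := hf i hi
  split_ifs <;> omega

theorem basicCover_sum_eq_of_right_perfect_matching_general {n k : ℕ} {G : SimpleGraph (Fin n)}
    {M : G.Subgraph} (hM : M.IsPerfectMatching) (hright : ∀ i j, M.Adj i j → IsRightEdge G i j)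
    {α : Fin n → ℕ} (hα : IsBasicCover G k α) : 2 * ∑ v, α v = n * k := by
  simpa only [smul_eq_mul, Fintype.card_fin] using
    two_nsmul_sum_eq_of_isPerfectMatching hM fun i j hij =>
      hα.add_eq_of_isRightEdge (hright i j hij)

/-- Let `G` be a graph on `2r` vertices admitting a perfect matching `M`
consisting of right edges.  Then every basic 1-cover `α` of `G` satisfies `∑ v, α v = r`;
in particular `G` is unmixed: every minimal vertex cover of `G` has cardinality `r`. -/
theorem basicCover_sum_eq_of_right_perfect_matching {r : ℕ}
    (G : SimpleGraph (Fin (2 * r)))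
    (M : G.Subgraph) (hM : M.IsPerfectMatching)
    (hright : ∀ i j : Fin (2 * r), M.Adj i j → IsRightEdge G i j) :
    ∀ α : Fin (2 * r) → ℕ, IsBasicCover G 1 α →
      (∑ v, α v = r) ∧ (Finset.univ.filter fun v => α v ≠ 0).card = r := by
  intro α hα
  have hsum : ∑ v, α v = r := by
    linarith [basicCover_sum_eq_of_right_perfect_matching_general hM hright hα]
  exact ⟨hsum, (card_filter_ne_zero_eq_sum_of_le_one fun v _ => hα.apply_le v).trans hsum⟩
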